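/- Define the rescaled fields Θ_L^ξ(x) := a_L(ξ_L(x) − a_L) and Θ_L^Ξ(x) := a_L(Ξ_L(x) − a_L^Ξ). Then for every z ∈ ℤ^d and every s ∈ ℝ: (ii) for χ = ξ and for χ = Ξ, (L/R_L)^d · P( there exist x ≠ y in Q_{R_L,z} with Θ_L^χ(x) ≥ −s and Θ_L^χ(y) ≥ −s ) → 0 as L → ∞; (iii) with w_{L,z} the maximiser of ξ_L over Q_{R_L,z} and w_{L,z}^Ξ the maximiser of Ξ_L over Q_{R_L,z}, (L/R_L)^d · P( max_{x ∈ Q_{R_L,z}} Ξ_L(x) ≥ a_L^Ξ − s/a_L and w_{L,z} ≠ w_{L,z}^Ξ ) → 0 as L → ∞. -/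

import Mathlib

open MeasureTheory ProbabilityTheory Filter Finset

noncomputable section

/-- Euclidean (ℓ²) norm of a point of `ℤ^d`. -/
def znorm {d : ℕ} (x : Fin d → ℤ) : ℝ := Real.sqrt (∑ i, ((x i : ℝ)) ^ 2)

/-- The discrete box `[-a/2, a/2]^d ∩ ℤ^d`. -/
def QBox (d : ℕ) (a : ℝ) : Finset (Fin d → ℤ) :=
  Finset.Icc (fun _ => Int.ceil (-(a / 2))) (fun _ => Int.floor (a / 2))

/-- The translated box `z + ([-a/2, a/2]^d ∩ ℤ^d)`. -/
def QBoxAt {d : ℕ} (a : ℝ) (z : Fin d → ℤ) : Finset (Fin d → ℤ) :=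
  (QBox d a).image (fun x => z + x)

/-- The box `[-1,1]^d ⊂ ℝ^d`. -/
def unitBox (d : ℕ) : Set (Fin d → ℝ) := Set.univ.pi fun _ => Set.Icc (-1) 1

/-- Nearest-neighbour adjacency on `ℤ^d`. -/
def Adj {d : ℕ} (x y : Fin d → ℤ) : Prop := (∑ i, |x i - y i|) = 1

instance {d : ℕ} (x y : Fin d → ℤ) : Decidable (Adj x y) := by
  unfold Adj; infer_instance

/-- `(lam, f)` is an eigenpair of the Anderson Hamiltonian `Δ + V` on `C ⊂ ℤ^d`
with Dirichlet boundary conditions (`f` vanishes outside `C`). -/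
def IsDirichletEigenpair {d : ℕ} (C : Finset (Fin d → ℤ)) (V : (Fin d → ℤ) → ℝ)
    (lam : ℝ) (f : (Fin d → ℤ) → ℝ) : Prop :=
  (∀ x ∉ C, f x = 0) ∧
  ∀ x ∈ C, ((∑ y ∈ C, if Adj x y then f y else 0) - 2 * (d : ℝ) * f x) + V x * f x = lam * f x

/-- `lam` is the largest Dirichlet eigenvalue of `Δ + V` on `C`. -/
def IsTopEigenvalue {d : ℕ} (C : Finset (Fin d → ℤ)) (V : (Fin d → ℤ) → ℝ) (lam : ℝ) : Prop :=
  (∃ f, f ≠ 0 ∧ IsDirichletEigenpair C V lam f) ∧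
  ∀ mu g, g ≠ 0 → IsDirichletEigenpair C V mu g → mu ≤ lam

/-- `(lam, f)` is the principal Dirichlet eigenvalue of `Δ + V` on `C` together with its
ℓ²-normalised nonnegative principal eigenfunction. -/
def IsPrincipalEigenpair {d : ℕ} (C : Finset (Fin d → ℤ)) (V : (Fin d → ℤ) → ℝ)
    (lam : ℝ) (f : (Fin d → ℤ) → ℝ) : Prop :=
  IsDirichletEigenpair C V lam f ∧ (∑ x ∈ C, f x ^ 2) = 1 ∧ (∀ x, 0 ≤ f x) ∧
  ∀ mu g, g ≠ 0 → IsDirichletEigenpair C V mu g → mu ≤ lam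

/-- A complete orthonormal eigenbasis of `Δ + V` on `C` with Dirichlet boundary
conditions, the eigenvalues being listed in nonincreasing order: `lam k` is the
`(k+1)`-th largest eigenvalue (with multiplicity) and `phi k` the associated
normalised eigenfunction. -/
def IsDirichletEigenbasis {d : ℕ} (C : Finset (Fin d → ℤ)) (V : (Fin d → ℤ) → ℝ)
    (lam : ℕ → ℝ) (phi : ℕ → (Fin d → ℤ) → ℝ) : Prop :=
  (∀ k < C.card, IsDirichletEigenpair C V (lam k) (phi k)) ∧
  (∀ j < C.card, ∀ k < C.card, j ≤ k → lam k ≤ lam j) ∧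
  (∀ j < C.card, ∀ k < C.card, (∑ x ∈ C, phi j x * phi k x) = if j = k then 1 else 0)

/-- Covariance of two real random variables. -/
def covar {Ω : Type} [MeasurableSpace Ω] (P : Measure Ω) (X Y : Ω → ℝ) : ℝ :=
  ∫ ω, (X ω - ∫ ω', X ω' ∂P) * (Y ω - ∫ ω', Y ω' ∂P) ∂P

/-- The basic setting of the paper: for each `L`, a centred stationary Gaussian field
`ξ_L` on `ℤ^d` with nonnegative covariance function `v_L`, `v_L(0) = 1`; `d_L` is defined
through `sup_{|x|=1} v_L(x) = 1 − 1/d_L` and `a_L > 0` through `P(ξ_L(0) > a_L) = L^{−d}`. -/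
structure GaussSetting (d : ℕ) (Ω : Type) [MeasurableSpace Ω] where
  P : Measure Ω
  hP : IsProbabilityMeasure P
  ξ : ℕ → Ω → (Fin d → ℤ) → ℝ
  v : ℕ → (Fin d → ℤ) → ℝ
  meas : ∀ L x, Measurable fun ω => ξ L ω x
  v_nonneg : ∀ L x, 0 ≤ v L x
  v_zero : ∀ L, v L 0 = 1
  gaussian : ∀ L, 2 ≤ L → ∀ (s : Finset (Fin d → ℤ)) (c : (Fin d → ℤ) → ℝ),
    Measure.map (fun ω => ∑ x ∈ s, c x * ξ L ω x) P
      = gaussianReal 0 (Real.toNNReal (∑ x ∈ s, ∑ y ∈ s, c x * c y * v L (x - y)))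
  dL : ℕ → ℝ
  dL_pos : ∀ L, 2 ≤ L → 0 < dL L
  dL_def : ∀ L, 2 ≤ L →
    IsGreatest {t : ℝ | ∃ x : Fin d → ℤ, znorm x = 1 ∧ t = v L x} (1 - 1 / dL L)
  aL : ℕ → ℝ
  aL_pos : ∀ L, 2 ≤ L → 0 < aL L
  aL_def : ∀ L, 2 ≤ L →
    P {ω | aL L < ξ L ω 0} = ENNReal.ofReal (1 / (L : ℝ) ^ d)

namespace GaussSetting

variable {d : ℕ} {Ω : Type} [MeasurableSpace Ω] (S : GaussSetting d Ω)

/-- The shape `S_L(x) = a_L (1 − v_L(x))`. -/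
def shape (L : ℕ) (x : Fin d → ℤ) : ℝ := S.aL L * (1 - S.v L x)

/-- Long-range decay assumption (I):
`sup_{|x| ≥ exp(√(ln L))} v_L(x) ln|x| → 0` as `L → ∞`. -/
def LongRangeDecay : Prop :=
  ∀ ε > (0 : ℝ), ∀ᶠ L : ℕ in atTop, ∀ x : Fin d → ℤ,
    Real.exp (Real.sqrt (Real.log L)) ≤ znorm x → S.v L x * Real.log (znorm x) ≤ ε

/-- Short-range decay assumption (II), with constants `c, c' > 0`. -/
def ShortRangeDecay (c c' : ℝ) : Prop :=
  0 < c ∧ 0 < c' ∧ ∀ L, 2 ≤ L → ∀ x : Fin d → ℤ, x ≠ 0 →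
    1 - Real.exp (c' * znorm x) / S.dL L ≤ S.v L x ∧ S.v L x ≤ 1 - c / S.dL L

/-- Assumption 1: `d_L ≪ a_L`. -/
def Assumption1 : Prop := Tendsto (fun L => S.dL L / S.aL L) atTop (nhds 0)

/-- The fluctuation field `ζ_{L,y}(x) = ξ_L(x) − ξ_L(y) v_L(x − y)`. -/
def zeta (L : ℕ) (y x : Fin d → ℤ) (ω : Ω) : ℝ :=
  S.ξ L ω x - S.ξ L ω y * S.v L (x - y)

/-- The field `Φ_L(y) = ∑_{x ∈ Q_{r_L}, x ≠ 0} φ̄_L(x)² ζ_{L,y}(x + y)`. -/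
def Phi (r : ℕ → ℝ) (phiBar : ℕ → (Fin d → ℤ) → ℝ) (L : ℕ) (y : Fin d → ℤ)
    (ω : Ω) : ℝ :=
  ∑ x ∈ (QBox d (r L)).erase 0, phiBar L x ^ 2 * S.zeta L y (x + y) ω

end GaussSetting

/-- The auxiliary mesoscopic data: the scales `r_L, R_L`, the principal eigenpair
`(λ̄_L, φ̄_L)` of `Δ − S_L` on `Q_{r_L}` and `τ_L` with `τ_L² = Var(Φ_L(0))`. -/
structure MesoData {d : ℕ} {Ω : Type} [MeasurableSpace Ω] (S : GaussSetting d Ω) where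
  rL : ℕ → ℝ
  RL : ℕ → ℝ
  lamBar : ℕ → ℝ
  phiBar : ℕ → (Fin d → ℤ) → ℝ
  tau : ℕ → ℝ
  rL_lower : ∀ L, 2 ≤ L → Real.log (S.aL L) ≤ Real.log (rL L)
  rL_upper : Tendsto (fun L => Real.log (rL L) / Real.sqrt (S.aL L)) atTop (nhds 0)
  RL_lower : Tendsto (fun L => S.aL L / Real.log (RL L)) atTop (nhds 0)
  RL_upper : Tendsto (fun L => Real.log (RL L) / (S.aL L * (S.aL L / S.dL L))) atTop (nhds 0)
  principal : ∀ L, 2 ≤ L →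
    IsPrincipalEigenpair (QBox d (rL L)) (fun x => -(S.shape L x)) (lamBar L) (phiBar L)
  tau_nonneg : ∀ L, 0 ≤ tau L
  tau_def : ∀ L, 2 ≤ L → tau L ^ 2 = variance (S.Phi rL phiBar L 0) S.P

/-- Assumption 2: `τ_L ≪ a_L^{-1} (a_L/d_L)^{1/2}`. -/
def Assumption2 {d : ℕ} {Ω : Type} [MeasurableSpace Ω] (S : GaussSetting d Ω)
    (M : MesoData S) : Prop :=
  Tendsto (fun L => S.aL L * M.tau L * Real.sqrt (S.dL L / S.aL L)) atTop (nhds 0)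

/-- The event `E¹_{L,x₀} = {|ξ_L(x₀) − a_L| < θ}`, `θ = 2d+1`. -/
def EventE1 {d : ℕ} {Ω : Type} [MeasurableSpace Ω] (S : GaussSetting d Ω) (L : ℕ)
    (x₀ : Fin d → ℤ) : Set Ω :=
  {ω | |S.ξ L ω x₀ - S.aL L| < 2 * (d : ℝ) + 1}

/-- The event `E²_{L,x₀} = {|ζ_{L,x₀}(x)| ≤ S_L(x−x₀)/10, ∀ x ∈ Q_{2R_L,x₀}}`. -/
def EventE2 {d : ℕ} {Ω : Type} [MeasurableSpace Ω] (S : GaussSetting d Ω) (RL : ℕ → ℝ)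
    (L : ℕ) (x₀ : Fin d → ℤ) : Set Ω :=
  {ω | ∀ x ∈ QBoxAt (2 * RL L) x₀, |S.zeta L x₀ x ω| ≤ S.shape L (x - x₀) / 10}

/-- The event `E³_{L,x₀}` controlling the fluctuation field on `Q_{R_L,x₀}`. -/
def EventE3 {d : ℕ} {Ω : Type} [MeasurableSpace Ω] (S : GaussSetting d Ω) (RL : ℕ → ℝ)
    (κ : ℝ) (L : ℕ) (x₀ : Fin d → ℤ) : Set Ω :=
  {ω | ∀ x ∈ QBoxAt (RL L) x₀, x ≠ x₀ →
    |S.zeta L x₀ x ω| ≤ Real.sqrt (variance (S.zeta L x₀ x) S.P) *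
      (S.aL L / S.dL L) ^ (κ * znorm (x - x₀)) *
      Real.sqrt (max 1 (|S.ξ L ω x₀ - S.aL L| * S.aL L))}

/-- The event `E_{L,x₀} = E¹ ∩ E² ∩ E³`. -/
def EventE {d : ℕ} {Ω : Type} [MeasurableSpace Ω] (S : GaussSetting d Ω) (RL : ℕ → ℝ)
    (κ : ℝ) (L : ℕ) (x₀ : Fin d → ℤ) : Set Ω :=
  EventE1 S L x₀ ∩ EventE2 S RL L x₀ ∩ EventE3 S RL κ L x₀

end

/-! The average of two distinct values of `ξ_L` has variance at most `1 - 𝔠 / (2 d_L)`, so the cost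
`exp (-a_L² / 2)` of one value near the level `a_L` is multiplied by `exp (-𝔠 a_L² / (8 d_L))` when
two sites have to reach that level. The field `Φ_L` has standard deviation `o(1 / d_L)` and
therefore exceeds `𝔠 a_L / (16 d_L)` with an even smaller probability, so it can neither create a
second high site nor change which site is the highest. By `P (ξ_L(0) > a_L) = L^{-d}`, the number
`(L / R_L)^d` of boxes times the number `≈ R_L^{2d}` of pairs is at most
`exp (a_L² / 2 + O(a_L) + d ln R_L)`, and `a_L` and `ln R_L` are both `o(a_L² / d_L)`. -/

lemma hasSubgaussianMGF_of_map_eq_gaussianReal {Ω : Type*} [MeasurableSpace Ω] {P : Measure Ω}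
    {X : Ω → ℝ} {v : NNReal} (hX : P.map X = gaussianReal 0 v) : HasSubgaussianMGF X v P where
  integrable_exp_mul t := by
    have hX_meas : AEMeasurable X P := aemeasurable_of_map_neZero (hX ▸ inferInstance)
    have hint := integrable_exp_mul_gaussianReal (μ := 0) (v := v) t
    rw [← hX] at hint
    exact (integrable_map_measure (by fun_prop) hX_meas).1 hint
  mgf_le t := by rw [mgf_gaussianReal hX, zero_mul, zero_add]

lemma hasSubgaussianMGF_mono {Ω : Type*} [MeasurableSpace Ω] {P : Measure Ω} {X : Ω → ℝ}
    {u v : NNReal} (hX : HasSubgaussianMGF X u P) (huv : u ≤ v) : HasSubgaussianMGF X v P where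
  integrable_exp_mul := hX.integrable_exp_mul
  mgf_le t := (hX.mgf_le t).trans <| by gcongr

lemma gaussianPDFReal_antitoneOn_Ici (m : ℝ) (v : NNReal) :
    AntitoneOn (gaussianPDFReal m v) (Set.Ici m) := by
  intro x hx y _ hxy
  have hx : 0 ≤ x - m := sub_nonneg.2 hx
  simp only [gaussianPDFReal, neg_div]
  gcongr

lemma ofReal_mul_gaussianPDF_le_gaussianReal_Ioi {m a : ℝ} (v : NNReal) (hm : m ≤ a) (h : ℝ) :
    ENNReal.ofReal h * gaussianPDF m v (a + h) ≤ gaussianReal m v (Set.Ioi a) := by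
  rcases eq_or_ne v 0 with rfl | hv
  · simp [gaussianPDF_zero_var]
  calc ENNReal.ofReal h * gaussianPDF m v (a + h)
      = ∫⁻ _ in Set.Ioc a (a + h), gaussianPDF m v (a + h) := by simp [mul_comm]
    _ ≤ ∫⁻ x in Set.Ioc a (a + h), gaussianPDF m v x := by
        refine setLIntegral_mono (measurable_gaussianPDF m v) fun x hx => ?_
        have hmx : m ≤ x := hm.trans hx.1.le
        exact ENNReal.ofReal_le_ofReal
          (gaussianPDFReal_antitoneOn_Ici m v hmx (hmx.trans hx.2) hx.2)
    _ ≤ ∫⁻ x in Set.Ioi a, gaussianPDF m v x := lintegral_mono_set Set.Ioc_subset_Ioi_self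
    _ = gaussianReal m v (Set.Ioi a) := (gaussianReal_apply m hv _).symm

lemma card_QBoxAt_le {d : ℕ} {R : ℝ} (hR : 1 ≤ R) (z : Fin d → ℤ) :
    ((QBoxAt R z).card : ℝ) ≤ (2 * R) ^ d := by
  have hside : ((⌊R / 2⌋ + 1 - ⌈-(R / 2)⌉).toNat : ℝ) ≤ 2 * R := by
    have hcast : ((⌊R / 2⌋ + 1 - ⌈-(R / 2)⌉).toNat : ℝ) =
        ((max (⌊R / 2⌋ + 1 - ⌈-(R / 2)⌉) 0 : ℤ) : ℝ) := by
      rw [← Int.toNat_eq_max, Int.cast_natCast]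
    rw [hcast]
    push_cast
    exact max_le (by linarith [Int.floor_le (R / 2), Int.le_ceil (-(R / 2))]) (by linarith)
  calc ((QBoxAt R z).card : ℝ)
      ≤ ((QBox d R).card : ℝ) := by exact_mod_cast Finset.card_image_le
    _ = ((⌊R / 2⌋ + 1 - ⌈-(R / 2)⌉).toNat : ℝ) ^ d := by simp [QBox, Pi.card_Icc]
    _ ≤ (2 * R) ^ d := by gcongr

lemma QBoxAt_subset_singleton {d : ℕ} {R : ℝ} (hR : R < 2) (z : Fin d → ℤ) :
    QBoxAt R z ⊆ {z} := by
  intro x hx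
  obtain ⟨u, hu, rfl⟩ := Finset.mem_image.1 hx
  obtain ⟨hlow, hhigh⟩ := Finset.mem_Icc.1 hu
  have hfloor : ⌊R / 2⌋ < 1 := Int.floor_lt.2 (by push_cast; linarith)
  have hceil : -1 < ⌈-(R / 2)⌉ := Int.lt_ceil.2 (by push_cast; linarith)
  have hu0 : u = 0 := by
    funext i
    have := hlow i
    have := hhigh i
    simp only [Pi.zero_apply] at *
    omega
  simp [hu0]

lemma card_offDiag_QBoxAt_le {d : ℕ} (R : ℝ) (z : Fin d → ℤ) :
    ((QBoxAt R z).offDiag.card : ℝ) ≤ (2 * R) ^ (2 * d) := by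
  rcases lt_or_ge R 2 with hR | hR
  · have hempty : (QBoxAt R z).offDiag ⊆ ∅ := by
      simpa using Finset.offDiag_mono (QBoxAt_subset_singleton hR z)
    rw [Finset.subset_empty.1 hempty, Finset.card_empty, Nat.cast_zero]
    exact (even_two_mul d).pow_nonneg _
  · calc ((QBoxAt R z).offDiag.card : ℝ)
        ≤ ((QBoxAt R z).card : ℝ) ^ 2 := by
          rw [Finset.offDiag_card, sq]
          exact_mod_cast Nat.sub_le _ _
      _ ≤ ((2 * R) ^ d) ^ 2 := by gcongr; exact card_QBoxAt_le (by linarith) z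
      _ = (2 * R) ^ (2 * d) := by rw [← pow_mul, mul_comm d]

/-- The event that two distinct points of `Q` have an average `X`-value of at least `b - u`, or that
`Y` is at least `u` at one of them. When `X` is perturbed to `X + Y`, this event contains the
occurrence of two points above level `b` and any change of the high maximiser. -/
def pairExceedance {ι Ω : Type*} (Q : Finset ι) (X Y : ι → Ω → ℝ) (b u : ℝ) : Set Ω :=
  {ω | ∃ x ∈ Q, ∃ y ∈ Q, x ≠ y ∧ (b - u ≤ (X x ω + X y ω) / 2 ∨ u ≤ Y x ω ∨ u ≤ Y y ω)}

lemma measureReal_pairExceedance_le {ι Ω : Type*} [MeasurableSpace Ω]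
    {P : Measure Ω} [IsFiniteMeasure P] (Q : Finset ι) (X Y : ι → Ω → ℝ) {b u p : ℝ}
    (hX : ∀ x y, x ≠ y → P.real {ω | b - u ≤ (X x ω + X y ω) / 2} ≤ p)
    (hY : ∀ x, P.real {ω | u ≤ Y x ω} ≤ p) :
    P.real (pairExceedance Q X Y b u) ≤ Q.offDiag.card * (3 * p) := by
  let bad (q : ι × ι) : Set Ω :=
    {ω | b - u ≤ (X q.1 ω + X q.2 ω) / 2} ∪ ({ω | u ≤ Y q.1 ω} ∪ {ω | u ≤ Y q.2 ω})
  have hcover : pairExceedance Q X Y b u ⊆ ⋃ q ∈ Q.offDiag, bad q := by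
    rintro ω ⟨x, hx, y, hy, hxy, hω⟩
    exact Set.mem_biUnion (x := (x, y)) (Finset.mem_offDiag.2 ⟨hx, hy, hxy⟩) hω
  have hbad : ∀ q ∈ Q.offDiag, P.real (bad q) ≤ 3 * p := fun q hq => by
    have hpair := hX q.1 q.2 (Finset.mem_offDiag.1 hq).2.2
    have hunion := measureReal_union_le (μ := P) {ω | b - u ≤ (X q.1 ω + X q.2 ω) / 2}
      ({ω | u ≤ Y q.1 ω} ∪ {ω | u ≤ Y q.2 ω})
    have hunion' := measureReal_union_le (μ := P) {ω | u ≤ Y q.1 ω} {ω | u ≤ Y q.2 ω}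
    linarith [hY q.1, hY q.2]
  calc P.real (pairExceedance Q X Y b u)
      ≤ P.real (⋃ q ∈ Q.offDiag, bad q) := measureReal_mono hcover (measure_ne_top P _)
    _ ≤ ∑ q ∈ Q.offDiag, P.real (bad q) := measureReal_biUnion_finset_le _ _
    _ ≤ Q.offDiag.card * (3 * p) := by
        simpa only [nsmul_eq_mul] using Finset.sum_le_card_nsmul _ _ _ hbad

lemma measureReal_le_exp_of_abs_le {Ω : Type*} [MeasurableSpace Ω] {P : Measure Ω}
    {Y : Ω → ℝ} {τ σ u : ℝ} (hY : HasSubgaussianMGF Y (τ ^ 2).toNNReal P) (hτ : |τ| ≤ σ)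
    (hu : 0 ≤ u) : P.real {ω | u ≤ Y ω} ≤ Real.exp (-u ^ 2 / (2 * σ ^ 2)) := by
  have hsq : τ ^ 2 ≤ σ ^ 2 := sq_le_sq' (neg_le_of_abs_le hτ) (le_of_abs_le hτ)
  simpa only [Real.coe_toNNReal _ (sq_nonneg σ)] using
    (hasSubgaussianMGF_mono hY (Real.toNNReal_le_toNNReal hsq)).measure_ge_le hu

lemma half_sq_add_le_sq_div {a q : ℝ} (s : ℝ) (ha : 0 < a) (hq : 0 ≤ q) (hq1 : q ≤ 1) :
    a ^ 2 / 2 + q * a ^ 2 / 8 - 2 * |s| ≤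
      (a - s / a - q / 16 * a) ^ 2 / (2 * (1 - q / 2)) := by
  have hsq : a ^ 2 * (1 - q / 8) - 2 * |s| ≤ (a - s / a - q / 16 * a) ^ 2 := by
    have hexpand : (a - s / a - q / 16 * a) ^ 2 =
        a ^ 2 * (1 - q / 16) ^ 2 - 2 * s * (1 - q / 16) + (s / a) ^ 2 := by
      field_simp
      ring
    have hs : s * (1 - q / 16) ≤ |s| := by nlinarith [le_abs_self s, abs_nonneg s]
    rw [hexpand]
    nlinarith [sq_nonneg (s / a), sq_nonneg (a * q)]
  have hsq_mul : 0 ≤ a ^ 2 * q ^ 2 := by positivity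
  have hsq_mul' : a ^ 2 * q ^ 2 ≤ a ^ 2 * q := by gcongr; nlinarith
  have habs : |s| * q ≤ |s| := mul_le_of_le_one_right (abs_nonneg s) hq1
  rw [le_div_iff₀ (by linarith)]
  nlinarith

namespace GaussSetting

variable {d : ℕ} {Ω : Type} [MeasurableSpace Ω] (S : GaussSetting d Ω) {L : ℕ}

instance : IsProbabilityMeasure S.P := S.hP

/-- The upper bound `v_L(x) ≤ 1 - 𝔠 / d_L` of the short-range decay assumption (II). -/
def ShortRangeUpperBound (c : ℝ) : Prop :=
  0 < c ∧ ∀ L, 2 ≤ L → ∀ x : Fin d → ℤ, x ≠ 0 → S.v L x ≤ 1 - c / S.dL L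

/-- The events `A_L`, each attached to one box of side length `R_L`, have probability
`o((R_L / L)^d)`, the inverse of the order of the number of such boxes in a box of side `L`. -/
def Negligible (R : ℕ → ℝ) (A : ℕ → Set Ω) : Prop :=
  Tendsto (fun L : ℕ => ENNReal.ofReal (((L : ℝ) / R L) ^ d) * S.P (A L)) atTop (nhds 0)

variable {S}

lemma ShortRangeDecay.upperBound {c c' : ℝ} (h : S.ShortRangeDecay c c') :
    S.ShortRangeUpperBound c :=
  ⟨h.1, fun L hL x hx => (h.2.2 L hL x hx).2⟩

lemma Negligible.mono {R : ℕ → ℝ} {A B : ℕ → Set Ω} (hB : S.Negligible R B)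
    (hAB : ∀ L, 2 ≤ L → A L ⊆ B L) : S.Negligible R A := by
  refine tendsto_of_tendsto_of_tendsto_of_le_of_le' tendsto_const_nhds hB
    (Eventually.of_forall fun _ => zero_le) ?_
  filter_upwards [eventually_ge_atTop 2] with L hL
  gcongr
  exact hAB L hL

lemma negligible_of_eventually_le {R : ℕ → ℝ} {A : ℕ → Set Ω} {g : ℕ → ℝ}
    (hg : Tendsto g atTop (nhds 0))
    (hA : ∀ᶠ L : ℕ in atTop, ((L : ℝ) / R L) ^ d * S.P.real (A L) ≤ g L) :
    S.Negligible R A := by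
  refine tendsto_of_tendsto_of_tendsto_of_le_of_le' tendsto_const_nhds
    (by simpa using ENNReal.tendsto_ofReal hg) (Eventually.of_forall fun _ => zero_le) ?_
  filter_upwards [hA] with L hL
  rw [← ofReal_measureReal (μ := S.P) (s := A L), ← ENNReal.ofReal_mul' measureReal_nonneg]
  exact ENNReal.ofReal_le_ofReal hL

lemma map_sum_translate (hL : 2 ≤ L) (s : Finset (Fin d → ℤ)) (g : (Fin d → ℤ) → ℝ)
    (y : Fin d → ℤ) :
    S.P.map (fun ω => ∑ x ∈ s, g x * S.ξ L ω (x + y)) =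
      gaussianReal 0 (∑ x ∈ s, ∑ x' ∈ s, g x * g x' * S.v L (x - x')).toNNReal := by
  simpa only [Finset.sum_map, addRightEmbedding_apply, add_sub_cancel_right,
    add_sub_add_right_eq_sub]
    using S.gaussian L hL (s.map (addRightEmbedding y)) fun x => g (x - y)

lemma pow_le_sqrt_mul_exp (hL : 2 ≤ L) :
    (L : ℝ) ^ d ≤ √(2 * Real.pi) * Real.exp ((S.aL L + 1) ^ 2 / 2) := by
  have hlaw : S.P.map (fun ω => S.ξ L ω 0) = gaussianReal 0 1 := by
    simpa [S.v_zero] using S.gaussian L hL {0} 1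
  have htail := ofReal_mul_gaussianPDF_le_gaussianReal_Ioi 1 (S.aL_pos L hL).le 1
  have hprob : gaussianReal 0 1 (Set.Ioi (S.aL L)) = ENNReal.ofReal (1 / (L : ℝ) ^ d) := by
    rw [← hlaw, Measure.map_apply (S.meas L 0) measurableSet_Ioi, ← S.aL_def L hL]
    rfl
  rw [hprob, ENNReal.ofReal_one, one_mul, gaussianPDF,
    ENNReal.ofReal_le_ofReal_iff (by positivity)] at htail
  have hL0 : 0 < (L : ℝ) := by positivity
  have hpdf : gaussianPDFReal 0 1 (S.aL L + 1) =
      1 / (√(2 * Real.pi) * Real.exp ((S.aL L + 1) ^ 2 / 2)) := by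
    simp [gaussianPDFReal, neg_div, Real.exp_neg, mul_comm]
  rw [hpdf] at htail
  exact (one_div_le_one_div (by positivity) (by positivity)).1 htail

lemma one_le_dL (hL : 2 ≤ L) : 1 ≤ S.dL L := by
  obtain ⟨x, -, hx⟩ := (S.dL_def L hL).1
  have := S.v_nonneg L x
  exact (div_le_one₀ (S.dL_pos L hL)).1 (by linarith)

lemma ShortRangeUpperBound.div_dL_le_one {c : ℝ} (h : S.ShortRangeUpperBound c) (hL : 2 ≤ L) :
    c / S.dL L ≤ 1 := by
  obtain ⟨x, hx, -⟩ := (S.dL_def L hL).1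
  have hx0 : x ≠ 0 := by rintro rfl; simp [znorm] at hx
  linarith [h.2 L hL x hx0, S.v_nonneg L x]

lemma ShortRangeUpperBound.hasSubgaussianMGF_average {c : ℝ} (h : S.ShortRangeUpperBound c)
    (hL : 2 ≤ L) {x y : Fin d → ℤ} (hxy : x ≠ y) :
    HasSubgaussianMGF (fun ω => (S.ξ L ω x + S.ξ L ω y) / 2)
      (1 - c / S.dL L / 2).toNNReal S.P := by
  have hlaw := S.gaussian L hL {x, y} fun _ => 1 / 2
  simp only [Finset.sum_pair hxy, sub_self, S.v_zero] at hlaw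
  have hmean : (fun ω => (S.ξ L ω x + S.ξ L ω y) / 2) =
      fun ω => 1 / 2 * S.ξ L ω x + 1 / 2 * S.ξ L ω y := by funext ω; ring
  rw [hmean]
  refine hasSubgaussianMGF_mono (hasSubgaussianMGF_of_map_eq_gaussianReal hlaw)
    (Real.toNNReal_le_toNNReal ?_)
  linarith [h.2 L hL (x - y) (sub_ne_zero.2 hxy), h.2 L hL (y - x) (sub_ne_zero.2 hxy.symm)]

lemma exists_Phi_eq_sum_translate (r : ℕ → ℝ) (f : ℕ → (Fin d → ℤ) → ℝ) (L : ℕ) :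
    ∃ (s : Finset (Fin d → ℤ)) (g : (Fin d → ℤ) → ℝ), ∀ y ω,
      S.Phi r f L y ω = ∑ x ∈ s, g x * S.ξ L ω (x + y) := by
  let B := (QBox d (r L)).erase 0
  let g := Function.update (fun x => f L x ^ 2) 0 (-∑ x ∈ B, f L x ^ 2 * S.v L x)
  have h0B : (0 : Fin d → ℤ) ∉ B := Finset.notMem_erase _ _
  refine ⟨insert 0 B, g, fun y ω => ?_⟩
  have hg : ∀ x ∈ B, g x = f L x ^ 2 := fun x hx =>
    Function.update_of_ne (ne_of_mem_of_not_mem hx h0B) _ _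
  have hg0 : g 0 = -∑ x ∈ B, f L x ^ 2 * S.v L x := Function.update_self ..
  have hsum : ∑ x ∈ B, g x * S.ξ L ω (x + y) = ∑ x ∈ B, f L x ^ 2 * S.ξ L ω (x + y) :=
    Finset.sum_congr rfl fun x hx => by rw [hg x hx]
  calc S.Phi r f L y ω
      = ∑ x ∈ B, (f L x ^ 2 * S.ξ L ω (x + y) - f L x ^ 2 * S.v L x * S.ξ L ω y) :=
        Finset.sum_congr rfl fun x _ => by rw [zeta, add_sub_cancel_right]; ring
    _ = g 0 * S.ξ L ω (0 + y) + ∑ x ∈ B, f L x ^ 2 * S.ξ L ω (x + y) := by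
        rw [Finset.sum_sub_distrib, ← Finset.sum_mul, zero_add, hg0]; ring
    _ = ∑ x ∈ insert 0 B, g x * S.ξ L ω (x + y) := by
        rw [Finset.sum_insert h0B, hsum]

lemma hasSubgaussianMGF_Phi (hL : 2 ≤ L) (r : ℕ → ℝ) (f : ℕ → (Fin d → ℤ) → ℝ)
    (y : Fin d → ℤ) :
    HasSubgaussianMGF (S.Phi r f L y) (variance (S.Phi r f L 0) S.P).toNNReal S.P := by
  obtain ⟨s, g, hPhi⟩ := S.exists_Phi_eq_sum_translate r f L
  have hlaw : ∀ y, S.P.map (S.Phi r f L y) =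
      gaussianReal 0 (∑ x ∈ s, ∑ x' ∈ s, g x * g x' * S.v L (x - x')).toNNReal := fun y =>
    funext (hPhi y) ▸ map_sum_translate hL s g y
  have hmeas : AEMeasurable (S.Phi r f L 0) S.P :=
    aemeasurable_of_map_neZero (hlaw 0 ▸ inferInstance)
  have hvar := HasLaw.variance_eq ⟨hmeas, hlaw 0⟩
  rw [variance_id_gaussianReal] at hvar
  rw [hvar, Real.toNNReal_coe]
  exact hasSubgaussianMGF_of_map_eq_gaussianReal (hlaw y)

lemma ShortRangeUpperBound.measureReal_average_le {c s : ℝ} (h : S.ShortRangeUpperBound c)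
    (hL : 2 ≤ L) (hs : 4 * |s| ≤ S.aL L ^ 2) {x y : Fin d → ℤ} (hxy : x ≠ y) :
    S.P.real {ω | S.aL L - s / S.aL L - c / S.dL L / 16 * S.aL L ≤
        (S.ξ L ω x + S.ξ L ω y) / 2} ≤
      Real.exp (-(S.aL L ^ 2 / 2 + c / S.dL L * S.aL L ^ 2 / 8 - 2 * |s|)) := by
  have ha : 0 < S.aL L := S.aL_pos L hL
  have hq : 0 < c / S.dL L := div_pos h.1 (S.dL_pos L hL)
  have hq1 : c / S.dL L ≤ 1 := h.div_dL_le_one hL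
  have hlevel : 0 ≤ S.aL L - s / S.aL L - c / S.dL L / 16 * S.aL L := by
    have hsa : s / S.aL L ≤ S.aL L / 4 := by
      rw [div_le_iff₀ ha]
      nlinarith [le_abs_self s]
    nlinarith
  refine ((h.hasSubgaussianMGF_average hL hxy).measure_ge_le hlevel).trans ?_
  rw [Real.coe_toNNReal _ (by linarith), neg_div, Real.exp_le_exp, neg_le_neg_iff]
  exact half_sq_add_le_sq_div s ha hq.le hq1

lemma ShortRangeUpperBound.measureReal_pairExceedance_le {c s t : ℝ}
    (h : S.ShortRangeUpperBound c) (hL : 2 ≤ L) (hs : 4 * |s| ≤ S.aL L ^ 2)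
    (Q : Finset (Fin d → ℤ)) {Y : (Fin d → ℤ) → Ω → ℝ}
    (hY : ∀ y, HasSubgaussianMGF (Y y) (t ^ 2).toNNReal S.P) (ht : |t| ≤ c / S.dL L / 32) :
    S.P.real (pairExceedance Q (fun x ω => S.ξ L ω x) Y (S.aL L - s / S.aL L)
        (c / S.dL L / 16 * S.aL L)) ≤
      Q.offDiag.card *
        (3 * Real.exp (-(S.aL L ^ 2 / 2 + c / S.dL L * S.aL L ^ 2 / 8 - 2 * |s|))) := by
  have ha : 0 < S.aL L := S.aL_pos L hL
  have hq : 0 < c / S.dL L := div_pos h.1 (S.dL_pos L hL)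
  have hq1 : c / S.dL L ≤ 1 := h.div_dL_le_one hL
  refine _root_.measureReal_pairExceedance_le Q _ Y
    (fun x y hxy => h.measureReal_average_le hL hs hxy) fun y => ?_
  refine (measureReal_le_exp_of_abs_le (hY y) ht (by positivity)).trans
    (Real.exp_le_exp.2 ?_)
  have hexponent : -(c / S.dL L / 16 * S.aL L) ^ 2 / (2 * (c / S.dL L / 32) ^ 2) =
      -(2 * S.aL L ^ 2) := by
    have := h.1
    have := S.dL_pos L hL
    field_simp
    norm_num
  rw [hexponent]
  nlinarith [abs_nonneg s, sq_nonneg (S.aL L)]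

lemma abs_div_pow_mul_card_offDiag_le (hL : 2 ≤ L) (R : ℝ) (z : Fin d → ℤ) :
    |(L : ℝ) / R| ^ d * (QBoxAt R z).offDiag.card ≤
      4 ^ d * √(2 * Real.pi) * Real.exp ((S.aL L + 1) ^ 2 / 2 + d * Real.log R) := by
  have hR : |R| ^ d ≤ Real.exp (d * Real.log R) := by
    rw [← Real.log_pow]
    refine (Real.le_exp_log _).trans_eq ?_
    rw [← abs_pow, Real.log_abs]
  have hside : |(L : ℝ) / R| * (2 * R) ^ 2 ≤ 4 * L * |R| := by
    have hcancel : |(L : ℝ) / R| * |R| ≤ L := by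
      rw [abs_div, Nat.abs_cast, div_mul_eq_mul_div, mul_div_assoc]
      exact mul_le_of_le_one_right (Nat.cast_nonneg L) (div_self_le_one |R|)
    calc |(L : ℝ) / R| * (2 * R) ^ 2 = 4 * (|(L : ℝ) / R| * |R|) * |R| := by
          rw [mul_pow, ← sq_abs R]
          ring
      _ ≤ 4 * L * |R| := by gcongr
  calc |(L : ℝ) / R| ^ d * (QBoxAt R z).offDiag.card
      ≤ |(L : ℝ) / R| ^ d * (2 * R) ^ (2 * d) := by
        gcongr
        exact card_offDiag_QBoxAt_le R z
    _ = (|(L : ℝ) / R| * (2 * R) ^ 2) ^ d := by rw [mul_pow _ _ d, pow_mul]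
    _ ≤ (4 * L * |R|) ^ d := by gcongr
    _ = 4 ^ d * (L : ℝ) ^ d * |R| ^ d := by rw [mul_pow, mul_pow]
    _ ≤ 4 ^ d * (√(2 * Real.pi) * Real.exp ((S.aL L + 1) ^ 2 / 2)) *
          Real.exp (d * Real.log R) := by
        gcongr
        exact S.pow_le_sqrt_mul_exp hL
    _ = 4 ^ d * √(2 * Real.pi) * Real.exp ((S.aL L + 1) ^ 2 / 2 + d * Real.log R) := by
        rw [Real.exp_add]
        ring

lemma ShortRangeUpperBound.div_pow_mul_measureReal_pairExceedance_le {c s t : ℝ}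
    (h : S.ShortRangeUpperBound c) (hL : 2 ≤ L) (hs : 4 * |s| ≤ S.aL L ^ 2) (R : ℝ)
    (z : Fin d → ℤ) {Y : (Fin d → ℤ) → Ω → ℝ}
    (hY : ∀ y, HasSubgaussianMGF (Y y) (t ^ 2).toNNReal S.P) (ht : |t| ≤ c / S.dL L / 32) :
    ((L : ℝ) / R) ^ d * S.P.real (pairExceedance (QBoxAt R z) (fun x ω => S.ξ L ω x) Y
        (S.aL L - s / S.aL L) (c / S.dL L / 16 * S.aL L)) ≤
      3 * 4 ^ d * √(2 * Real.pi) * Real.exp (1 / 2 + 2 * |s|) *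
        Real.exp (S.aL L + d * Real.log R - c / 8 * (S.aL L * (S.aL L / S.dL L))) := by
  set A := pairExceedance (QBoxAt R z) (fun x ω => S.ξ L ω x) Y (S.aL L - s / S.aL L)
    (c / S.dL L / 16 * S.aL L)
  let p : ℝ := Real.exp (-(S.aL L ^ 2 / 2 + c / S.dL L * S.aL L ^ 2 / 8 - 2 * |s|))
  calc ((L : ℝ) / R) ^ d * S.P.real A
      ≤ |(L : ℝ) / R| ^ d * S.P.real A := by
        rw [← abs_pow]
        gcongr
        exact le_abs_self (((L : ℝ) / R) ^ d)
    _ ≤ |(L : ℝ) / R| ^ d * ((QBoxAt R z).offDiag.card * (3 * p)) := by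
        gcongr
        exact h.measureReal_pairExceedance_le hL hs _ hY ht
    _ = |(L : ℝ) / R| ^ d * (QBoxAt R z).offDiag.card * (3 * p) := by ring
    _ ≤ 4 ^ d * √(2 * Real.pi) * Real.exp ((S.aL L + 1) ^ 2 / 2 + d * Real.log R) *
          (3 * p) :=
        mul_le_mul_of_nonneg_right (abs_div_pow_mul_card_offDiag_le hL R z) (by positivity)
    _ = 3 * 4 ^ d * √(2 * Real.pi) *
          (Real.exp ((S.aL L + 1) ^ 2 / 2 + d * Real.log R) * p) := by ring
    _ = 3 * 4 ^ d * √(2 * Real.pi) * Real.exp (1 / 2 + 2 * |s|) *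
          Real.exp (S.aL L + d * Real.log R - c / 8 * (S.aL L * (S.aL L / S.dL L))) := by
        rw [mul_assoc _ (Real.exp _) (Real.exp _), ← Real.exp_add, ← Real.exp_add]
        ring_nf

lemma Assumption1.tendsto_aL_div_dL (hA1 : S.Assumption1) :
    Tendsto (fun L => S.aL L / S.dL L) atTop atTop := by
  have hpos : ∀ᶠ L in atTop, S.dL L / S.aL L ∈ Set.Ioi 0 := by
    filter_upwards [eventually_ge_atTop 2] with L hL
    exact div_pos (S.dL_pos L hL) (S.aL_pos L hL)
  exact (tendsto_nhdsWithin_iff.2 ⟨hA1, hpos⟩).inv_tendsto_nhdsGT_zero.congr fun L => inv_div _ _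

lemma Assumption1.tendsto_aL (hA1 : S.Assumption1) : Tendsto S.aL atTop atTop := by
  refine tendsto_atTop_mono' _ ?_ hA1.tendsto_aL_div_dL
  filter_upwards [eventually_ge_atTop 2] with L hL
  exact div_le_self (S.aL_pos L hL).le (one_le_dL hL)

lemma Assumption1.tendsto_aL_mul (hA1 : S.Assumption1) :
    Tendsto (fun L => S.aL L * (S.aL L / S.dL L)) atTop atTop :=
  hA1.tendsto_aL.atTop_mul_atTop₀ hA1.tendsto_aL_div_dL

lemma Assumption1.tendsto_dL_mul_of_tendsto {τ : ℕ → ℝ} (hA1 : S.Assumption1)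
    (hτ : Tendsto (fun L => S.aL L * τ L * √(S.dL L / S.aL L)) atTop (nhds 0)) :
    Tendsto (fun L => S.dL L * τ L) atTop (nhds 0) := by
  have hsqrt : Tendsto (fun L => √(S.dL L / S.aL L)) atTop (nhds 0) := by
    simpa only [Real.sqrt_zero] using Tendsto.sqrt hA1
  have hmul := hτ.mul hsqrt
  rw [mul_zero] at hmul
  refine hmul.congr' ?_
  filter_upwards [eventually_ge_atTop 2] with L hL
  have ha := S.aL_pos L hL
  have hd := S.dL_pos L hL
  rw [mul_assoc, Real.mul_self_sqrt (by positivity)]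
  field_simp

lemma Assumption1.tendsto_exp_zero {c k : ℝ} {R : ℕ → ℝ} (hA1 : S.Assumption1) (hc : 0 < c)
    (hR : Tendsto (fun L => Real.log (R L) / (S.aL L * (S.aL L / S.dL L))) atTop (nhds 0)) :
    Tendsto (fun L => Real.exp (S.aL L + k * Real.log (R L) -
      c * (S.aL L * (S.aL L / S.dL L)))) atTop (nhds 0) := by
  let D (L : ℕ) : ℝ := S.aL L * (S.aL L / S.dL L)
  have hD : Tendsto D atTop atTop := hA1.tendsto_aL_mul
  have hrate : Tendsto (fun L => c - k * (Real.log (R L) / D L) - S.dL L / S.aL L)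
      atTop (nhds c) := by
    simpa only [mul_zero, sub_zero] using
      ((hR.const_mul k).const_sub c).sub (show Tendsto _ _ _ from hA1)
  refine (Real.tendsto_exp_neg_atTop_nhds_zero.comp (hD.atTop_mul_pos hc hrate)).congr' ?_
  filter_upwards [eventually_ge_atTop 2, hD.eventually_gt_atTop 0] with L hL hDpos
  have haD : D L * (S.dL L / S.aL L) = S.aL L := by
    have := S.aL_pos L hL
    have := S.dL_pos L hL
    simp only [D]
    field_simp
  have hRD : D L * (Real.log (R L) / D L) = Real.log (R L) := mul_div_cancel₀ _ hDpos.ne'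
  rw [Function.comp_apply]
  congr 1
  linear_combination k * hRD + haD

theorem negligible_pairExceedance {c : ℝ} {R τ : ℕ → ℝ} {Φ : ℕ → (Fin d → ℤ) → Ω → ℝ}
    (hSR : S.ShortRangeUpperBound c) (hA1 : S.Assumption1)
    (hR : Tendsto (fun L => Real.log (R L) / (S.aL L * (S.aL L / S.dL L))) atTop (nhds 0))
    (hΦ : ∀ L, 2 ≤ L → ∀ y, HasSubgaussianMGF (Φ L y) (τ L ^ 2).toNNReal S.P)
    (hτ : Tendsto (fun L => S.dL L * τ L) atTop (nhds 0)) (z : Fin d → ℤ) (s : ℝ) :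
    S.Negligible R fun L => pairExceedance (QBoxAt (R L) z) (fun x ω => S.ξ L ω x) (Φ L)
      (S.aL L - s / S.aL L) (c / S.dL L / 16 * S.aL L) := by
  have hc : 0 < c := hSR.1
  have hτ_le : ∀ᶠ L in atTop, |S.dL L * τ L| ≤ c / 32 :=
    (by simpa using hτ.abs : Tendsto (fun L => |S.dL L * τ L|) atTop (nhds 0)).eventually_le_const
      (by positivity)
  have hs_le : ∀ᶠ L in atTop, 4 * |s| ≤ S.aL L ^ 2 :=
    ((tendsto_pow_atTop two_ne_zero).comp hA1.tendsto_aL).eventually_ge_atTop _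
  have hlim := (hA1.tendsto_exp_zero (k := d) (show 0 < c / 8 by positivity) hR).const_mul
    (3 * 4 ^ d * √(2 * Real.pi) * Real.exp (1 / 2 + 2 * |s|))
  rw [mul_zero] at hlim
  refine negligible_of_eventually_le hlim ?_
  filter_upwards [eventually_ge_atTop 2, hτ_le, hs_le] with L hL hτL hsL
  have hd : 0 < S.dL L := S.dL_pos L hL
  have hτ_small : |τ L| ≤ c / S.dL L / 32 := by
    rw [abs_mul, abs_of_pos hd] at hτL
    rw [div_right_comm, le_div_iff₀ hd]
    linarith
  exact hSR.div_pow_mul_measureReal_pairExceedance_le hL hsL (R L) z (hΦ L hL) hτ_small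

end GaussSetting

lemma sub_div_le_of_neg_le_mul_sub {a s x b : ℝ} (ha : 0 < a) (h : -s ≤ a * (x - b)) :
    b - s / a ≤ x := by
  have hdiv : -s / a ≤ x - b := (div_le_iff₀' ha).2 h
  rw [neg_div] at hdiv
  linarith

theorem unique_max_and_same_maximiser_general {d : ℕ} {Ω : Type} [MeasurableSpace Ω]
    {S : GaussSetting d Ω} {c : ℝ} (hSR : S.ShortRangeUpperBound c) (hA1 : S.Assumption1)
    {R τ : ℕ → ℝ} {Φ : ℕ → (Fin d → ℤ) → Ω → ℝ}
    (hR : Tendsto (fun L => Real.log (R L) / (S.aL L * (S.aL L / S.dL L))) atTop (nhds 0))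
    (hΦ : ∀ L, 2 ≤ L → ∀ y, HasSubgaussianMGF (Φ L y) (τ L ^ 2).toNNReal S.P)
    (hτ : Tendsto (fun L => S.dL L * τ L) atTop (nhds 0))
    {w : ℕ → (Fin d → ℤ) → Ω → (Fin d → ℤ)}
    (hw_mem : ∀ L, 2 ≤ L → ∀ z ω, w L z ω ∈ QBoxAt (R L) z)
    (hw_max : ∀ L, 2 ≤ L → ∀ z ω, ∀ x ∈ QBoxAt (R L) z, S.ξ L ω x ≤ S.ξ L ω (w L z ω))
    (z : Fin d → ℤ) (s : ℝ) :
    S.Negligible R (fun L => {ω | ∃ x ∈ QBoxAt (R L) z, ∃ y ∈ QBoxAt (R L) z, x ≠ y ∧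
      -s ≤ S.aL L * (S.ξ L ω x - S.aL L) ∧ -s ≤ S.aL L * (S.ξ L ω y - S.aL L)}) ∧
    S.Negligible R (fun L => {ω | ∃ x ∈ QBoxAt (R L) z, ∃ y ∈ QBoxAt (R L) z, x ≠ y ∧
      -s ≤ S.aL L * ((S.ξ L ω x + Φ L x ω) - S.aL L * √(1 + τ L ^ 2)) ∧
      -s ≤ S.aL L * ((S.ξ L ω y + Φ L y ω) - S.aL L * √(1 + τ L ^ 2))}) ∧
    S.Negligible R (fun L => {ω | ∃ x ∈ QBoxAt (R L) z, w L z ω ≠ x ∧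
      S.aL L * √(1 + τ L ^ 2) - s / S.aL L ≤ S.ξ L ω x + Φ L x ω}) := by
  have hbad := GaussSetting.negligible_pairExceedance hSR hA1 hR hΦ hτ z s
  have hmargin : ∀ L, 2 ≤ L → 0 < c / S.dL L / 16 * S.aL L := fun L hL =>
    mul_pos (div_pos (div_pos hSR.1 (S.dL_pos L hL)) (by norm_num)) (S.aL_pos L hL)
  have hlevel : ∀ L, 2 ≤ L → S.aL L ≤ S.aL L * √(1 + τ L ^ 2) := fun L hL =>
    le_mul_of_one_le_right (S.aL_pos L hL).le
      (Real.one_le_sqrt.2 (le_add_of_nonneg_right (sq_nonneg _)))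
  refine ⟨hbad.mono ?_, hbad.mono ?_, hbad.mono ?_⟩
  · rintro L hL ω ⟨x, hx, y, hy, hxy, hxs, hys⟩
    have hx_high := sub_div_le_of_neg_le_mul_sub (S.aL_pos L hL) hxs
    have hy_high := sub_div_le_of_neg_le_mul_sub (S.aL_pos L hL) hys
    exact ⟨x, hx, y, hy, hxy, Or.inl (by linarith [hmargin L hL])⟩
  · rintro L hL ω ⟨x, hx, y, hy, hxy, hxs, hys⟩
    have hx_high := sub_div_le_of_neg_le_mul_sub (S.aL_pos L hL) hxs
    have hy_high := sub_div_le_of_neg_le_mul_sub (S.aL_pos L hL) hys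
    refine ⟨x, hx, y, hy, hxy, ?_⟩
    by_contra! hgood
    linarith [hlevel L hL]
  · rintro L hL ω ⟨x, hx, hwx, hx_high⟩
    have hξ := hw_max L hL z ω x hx
    refine ⟨w L z ω, hw_mem L hL z ω, x, hx, hwx, ?_⟩
    by_contra! hgood
    linarith [hlevel L hL]

/-- Lemma 2.7 (ii) and (iii).
With `Θ_L^ξ(x) = a_L(ξ_L(x) − a_L)` and `Θ_L^Ξ(x) = a_L(Ξ_L(x) − a_L^Ξ)`, for every
`z ∈ ℤ^d` and `s ∈ ℝ`: (ii) for `χ = ξ` and `χ = Ξ`,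
`(L/R_L)^d P(∃ x ≠ y ∈ Q_{R_L,z}, Θ_L^χ(x) ≥ −s, Θ_L^χ(y) ≥ −s) → 0`; (iii) with
`w_{L,z}` resp. `w_{L,z}^Ξ` the maximisers of `ξ_L` resp. `Ξ_L` over `Q_{R_L,z}`,
`(L/R_L)^d P(max_{Q_{R_L,z}} Ξ_L ≥ a_L^Ξ − s/a_L ; w_{L,z} ≠ w_{L,z}^Ξ) → 0`. -/
theorem unique_max_and_same_maximiser
    {d : ℕ} (hd : 1 ≤ d) {Ω : Type} [MeasurableSpace Ω] (S : GaussSetting d Ω)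
    (c c' : ℝ) (hSR : S.ShortRangeDecay c c')
    (hLR : S.LongRangeDecay)
    (hA1 : S.Assumption1)
    (M : MesoData S) (hA2 : Assumption2 S M)
    -- `w L z ω` is the maximiser of `ξ_L` over `Q_{R_L,z}`
    (w : ℕ → (Fin d → ℤ) → Ω → (Fin d → ℤ))
    (hw_mem : ∀ L : ℕ, 2 ≤ L → ∀ z ω, w L z ω ∈ QBoxAt (M.RL L) z)
    (hw_max : ∀ L : ℕ, 2 ≤ L → ∀ z ω, ∀ x ∈ QBoxAt (M.RL L) z,
      S.ξ L ω x ≤ S.ξ L ω (w L z ω))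
    -- `wΞ L z ω` is the maximiser of `Ξ_L = ξ_L + Φ_L` over `Q_{R_L,z}`
    (wΞ : ℕ → (Fin d → ℤ) → Ω → (Fin d → ℤ))
    (hwΞ_mem : ∀ L : ℕ, 2 ≤ L → ∀ z ω, wΞ L z ω ∈ QBoxAt (M.RL L) z)
    (hwΞ_max : ∀ L : ℕ, 2 ≤ L → ∀ z ω, ∀ x ∈ QBoxAt (M.RL L) z,
      S.ξ L ω x + S.Phi M.rL M.phiBar L x ω ≤
        S.ξ L ω (wΞ L z ω) + S.Phi M.rL M.phiBar L (wΞ L z ω) ω) :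
    ∀ z : Fin d → ℤ, ∀ s : ℝ,
    -- (ii) for `χ = ξ`
    (Tendsto
      (fun L : ℕ => ENNReal.ofReal (((L : ℝ) / M.RL L) ^ d) *
        S.P {ω | ∃ x ∈ QBoxAt (M.RL L) z, ∃ y ∈ QBoxAt (M.RL L) z, x ≠ y ∧
          -s ≤ S.aL L * (S.ξ L ω x - S.aL L) ∧ -s ≤ S.aL L * (S.ξ L ω y - S.aL L)})
      atTop (nhds 0)) ∧
    -- (ii) for `χ = Ξ`
    (Tendsto
      (fun L : ℕ => ENNReal.ofReal (((L : ℝ) / M.RL L) ^ d) *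
        S.P {ω | ∃ x ∈ QBoxAt (M.RL L) z, ∃ y ∈ QBoxAt (M.RL L) z, x ≠ y ∧
          -s ≤ S.aL L * ((S.ξ L ω x + S.Phi M.rL M.phiBar L x ω)
                - S.aL L * Real.sqrt (1 + M.tau L ^ 2)) ∧
          -s ≤ S.aL L * ((S.ξ L ω y + S.Phi M.rL M.phiBar L y ω)
                - S.aL L * Real.sqrt (1 + M.tau L ^ 2))})
      atTop (nhds 0)) ∧
    -- (iii)
    (Tendsto
      (fun L : ℕ => ENNReal.ofReal (((L : ℝ) / M.RL L) ^ d) *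
        S.P {ω | (S.aL L * Real.sqrt (1 + M.tau L ^ 2) - s / S.aL L ≤
            S.ξ L ω (wΞ L z ω) + S.Phi M.rL M.phiBar L (wΞ L z ω) ω) ∧
          w L z ω ≠ wΞ L z ω})
      atTop (nhds 0)) := by
  intro z s
  have hΦ : ∀ L, 2 ≤ L → ∀ y,
      HasSubgaussianMGF (S.Phi M.rL M.phiBar L y) (M.tau L ^ 2).toNNReal S.P :=
    fun L hL y => M.tau_def L hL ▸ GaussSetting.hasSubgaussianMGF_Phi hL M.rL M.phiBar y
  obtain ⟨hξ, hΞ, hmax⟩ := unique_max_and_same_maximiser_general hSR.upperBound hA1 M.RL_upper hΦ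
    (hA1.tendsto_dL_mul_of_tendsto hA2) hw_mem hw_max z s
  exact ⟨hξ, hΞ, hmax.mono fun L hL ω hω => ⟨wΞ L z ω, hwΞ_mem L hL z ω, hω.2, hω.1⟩⟩
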